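/- (Theorem 3.2, one-block estimate) For every jump rate c, every Γ-invariant local function bundle f: V×Z → ℝ, and every constant C > 0, it holds that lim_{i→∞} limsup_{m→∞} sup_{μ ∈ P_{m,C}} E_μ | f̄_{o,i} − ⟨f_o⟩( η̄_{o,i} ) | = 0. -/

import Mathlib

open Filter Pointwise

namespace Tower

variable {Γ : Type} [Group Γ] [DecidableEq Γ]

/-- The ball of radius `n` about the identity in the Cayley graph of `(Γ, S)`, as a `Finset`:
products of at most `n` elements of `S`. -/
def ballF (S : Finset Γ) : ℕ → Finset Γ
  | 0 => {1}
  | n + 1 => ballF S n ∪ ballF S n * S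

lemma one_mem_ballF (S : Finset Γ) (n : ℕ) : (1 : Γ) ∈ ballF S n := by
  induction n with
  | zero => simp [ballF]
  | succ n ih => exact Finset.mem_union_left _ ih

/-- The word norm of `x` with respect to `S`. -/
noncomputable def wordNorm (S : Finset Γ) (x : Γ) : ℕ := sInf {n | x ∈ ballF S n}

/-- `(F i)` is a Følner sequence for `(Γ, S)`. -/
def IsFolner (S : Finset Γ) (F : ℕ → Finset Γ) : Prop :=
  (∀ i, (F i).Nonempty) ∧
    Tendsto (fun i => (((F i * S) \ F i).card : ℝ) / (F i).card) atTop (nhds 0)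

/-- `b(K)`: the largest `i` such that `F i` is contained in the ball of radius `K` about `o`. -/
noncomputable def bFol (S : Finset Γ) (F : ℕ → Finset Γ) (K : ℝ) : ℕ :=
  sSup {i | ∀ x ∈ F i, (wordNorm S x : ℝ) ≤ K}

/-- Exchange the values of a configuration at two coordinates. -/
def exch {α : Type} [DecidableEq α] (x y : α) (η : α → Bool) : α → Bool :=
  fun z => if z = x then η y else if z = y then η x else η z

/-- Exchange of values at two coordinates, on configurations restricted to a `Finset`. -/
def exchOn {α : Type} [DecidableEq α] (A : Finset α) (x y : α)
    (ζ : {a // a ∈ A} → Bool) : {a // a ∈ A} → Bool :=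
  fun z => if (z : α) = x then (if h : y ∈ A then ζ ⟨y, h⟩ else ζ z)
    else if (z : α) = y then (if h : x ∈ A then ζ ⟨x, h⟩ else ζ z) else ζ z

/-- The type of generators. -/
abbrev Gen (S : Finset Γ) : Type _ := {s : Γ // s ∈ S}

/-- A `Γ`-invariant local function bundle for vertices `f : V × Z → ℝ` on the Cayley graph
`X = (V, E)` of `(Γ, S)`, `V = Γ`, `Z = {0,1}^V`. -/
structure LocalBundleV (S : Finset Γ) : Type _ where
  f : Γ → (Γ → Bool) → ℝ
  r : ℕ
  localized : ∀ (x : Γ) (η η' : Γ → Bool),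
    (∀ z ∈ (ballF S r).image (x * ·), η z = η' z) → f x η = f x η'
  invariant : ∀ (σ x : Γ) (η : Γ → Bool), f (σ * x) (fun z => η (σ⁻¹ * z)) = f x η

/-- A jump rate: a symmetric, non-degenerate `Γ`-invariant local function bundle for edges,
an edge being encoded as a pair `(x, s) : Γ × Gen S` with origin `x` and terminus `x * s`. -/
structure JumpRate (S : Finset Γ) : Type _ where
  c : Γ → Gen S → (Γ → Bool) → ℝ
  c₀ : ℝ
  c₀_pos : 0 < c₀
  nondeg : ∀ x s η, c₀ ≤ c x s η
  r : ℕ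
  localized : ∀ (x : Γ) (s : Gen S) (η η' : Γ → Bool),
    (∀ z ∈ (ballF S r).image (x * ·) ∪ (ballF S r).image (x * (s : Γ) * ·), η z = η' z) →
      c x s η = c x s η'
  invariant : ∀ (σ x : Γ) (s : Gen S) (η : Γ → Bool),
    c (σ * x) s (fun z => η (σ⁻¹ * z)) = c x s η
  symm_rev : ∀ (x : Γ) (s : Gen S) (h : (s : Γ)⁻¹ ∈ S) (η : Γ → Bool),
    c (x * (s : Γ)) ⟨(s : Γ)⁻¹, h⟩ η = c x s η
  symm_exch : ∀ (x : Γ) (s : Gen S) (η : Γ → Bool),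
    c x s (exch x (x * (s : Γ)) η) = c x s η

/-- `ρ`-Bernoulli weight on `{0,1}`. -/
def bw (ρ : ℝ) (b : Bool) : ℝ := if b then ρ else 1 - ρ

/-- Expectation with respect to the `ρ`-Bernoulli product measure `ν_ρ` of a cylinder function
depending only on the coordinates in the finite set `A`. -/
noncomputable def expCyl (ρ : ℝ) (A : Finset Γ) (g : (Γ → Bool) → ℝ) : ℝ :=
  ∑ ζ : ({a // a ∈ A} → Bool),
    (∏ a : {a // a ∈ A}, bw ρ (ζ a)) *
      g (fun z => if h : z ∈ A then ζ ⟨z, h⟩ else false)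

/-- The global average `⟨f_o⟩(ρ) = E_{ν_ρ}[f_o]`. -/
noncomputable def globalAvg {S : Finset Γ} (f : LocalBundleV S) (ρ : ℝ) : ℝ :=
  expCyl ρ (ballF S f.r) (f.f 1)

section Quot

variable (N : Subgroup Γ)

/-- The configuration space `Z_m = {0,1}^{V_m}` over the quotient graph `X_m = Γ_m \ X`. -/
abbrev Conf (N : Subgroup Γ) : Type _ := (Γ ⧸ N) → Bool

/-- The `Γ_m`-periodic extension of a configuration on `X_m` to `X`. -/
def liftZ (η : Conf N) : Γ → Bool := fun x => η (QuotientGroup.mk x)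

/-- The function on `V_m × Z_m` induced by a local function bundle. -/
noncomputable def fQ {S : Finset Γ} (f : LocalBundleV S) (v : Γ ⧸ N) (η : Conf N) : ℝ :=
  f.f (Quotient.out v) (liftZ N η)

/-- The jump rate induced on the quotient graph, on the edge `(v, v * s)`. -/
noncomputable def cQ {S : Finset Γ} (c : JumpRate S) (v : Γ ⧸ N) (s : Gen S) (η : Conf N) : ℝ :=
  c.c (Quotient.out v) s (liftZ N η)

variable [N.Normal]

/-- `η^e` on the quotient, for the edge `e = (v, v * s)`. -/
def exchQ [DecidableEq (Γ ⧸ N)] (v : Γ ⧸ N) (s : Γ) (η : Conf N) : Conf N :=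
  exch v (v * QuotientGroup.mk s) η

/-- The graph distance on the quotient graph `X_m`. -/
noncomputable def distQ (S : Finset Γ) (v w : Γ ⧸ N) : ℕ :=
  sInf {n | ∃ x ∈ ballF S n, v * QuotientGroup.mk x = w}

/-- The diameter of the quotient graph `X_m`. -/
noncomputable def diamQ (S : Finset Γ) : ℕ :=
  sSup {k | ∃ v w : Γ ⧸ N, distQ N S v w = k}

variable [Fintype (Γ ⧸ N)] [DecidableEq (Γ ⧸ N)]

/-- `μ` is a probability measure on the finite configuration space `Z_m`. -/
def IsProb (μ : Conf N → ℝ) : Prop := (∀ η, 0 ≤ μ η) ∧ ∑ η, μ η = 1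

/-- The action of `Γ/Γ_m` on `Z_m`. -/
def actQ (σ : Γ ⧸ N) (η : Conf N) : Conf N := fun z => η (σ⁻¹ * z)

/-- `μ` is `Γ/Γ_m`-invariant. -/
def IsInvariant (μ : Conf N → ℝ) : Prop := ∀ σ η, μ (actQ N σ η) = μ η

/-- The uniform ((1/2)-Bernoulli) measure `ν_m` on `Z_m`. -/
noncomputable def nuU : Conf N → ℝ := fun _ => (Fintype.card (Conf N) : ℝ)⁻¹

/-- The density `φ = dμ/dν_m`. -/
noncomputable def dens (μ : Conf N → ℝ) : Conf N → ℝ :=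
  fun η => (Fintype.card (Conf N) : ℝ) * μ η

/-- `√φ` where `φ = dμ/dν_m`. -/
noncomputable def sqrtDens (μ : Conf N → ℝ) : Conf N → ℝ :=
  fun η => Real.sqrt (dens N μ η)

/-- Expectation with respect to a probability measure on `Z_m`. -/
noncomputable def Emeas (μ : Conf N → ℝ) (g : Conf N → ℝ) : ℝ := ∑ η, μ η * g η

/-- The generator `L_m F (η) = Σ_{e ∈ E_m} c(e,η) (F(η^e) - F(η))`. -/
noncomputable def Lgen {S : Finset Γ} (c : JumpRate S) (F : Conf N → ℝ) (η : Conf N) : ℝ :=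
  ∑ e : (Γ ⧸ N) × Gen S, cQ N c e.1 e.2 η * (F (exchQ N e.1 (e.2 : Γ) η) - F η)

/-- The Dirichlet form `I_m(μ) = -∫ √φ L_m √φ dν_m`. -/
noncomputable def ImGen {S : Finset Γ} (c : JumpRate S) (μ : Conf N → ℝ) : ℝ :=
  - ∑ η, nuU N η * (sqrtDens N μ η * Lgen N c (sqrtDens N μ) η)

/-- The Dirichlet form in sum form:
`I_m(μ) = (1/2) Σ_{e ∈ E_m} ∫ c(e,η) (π_e √φ)² dν_m`. -/
noncomputable def ImSum {S : Finset Γ} (c : JumpRate S) (μ : Conf N → ℝ) : ℝ :=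
  (1 / 2) * ∑ e : (Γ ⧸ N) × Gen S, ∑ η, nuU N η *
    (cQ N c e.1 e.2 η * (sqrtDens N μ (exchQ N e.1 (e.2 : Γ) η) - sqrtDens N μ η) ^ 2)

/-- The local average `f̄_{v,i}` on the quotient, over the Følner set `Fi`. -/
noncomputable def fbarQ {S : Finset Γ} (f : LocalBundleV S) (Fi : Finset Γ) (v : Γ ⧸ N)
    (η : Conf N) : ℝ :=
  ((Fi.card : ℝ))⁻¹ * ∑ σ ∈ Fi, fQ N f (QuotientGroup.mk σ * v) η

/-- The local particle density `η̄_{v,i}` on the quotient, over the Følner set `Fi`. -/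
noncomputable def etabarQ (Fi : Finset Γ) (v : Γ ⧸ N) (η : Conf N) : ℝ :=
  ((Fi.card : ℝ))⁻¹ * ∑ σ ∈ Fi, (if η (QuotientGroup.mk σ * v) then (1 : ℝ) else 0)

/-- The image of `E⁰ = {e ∈ E : oe = o or te = o}` in `E_m`. -/
def E0Q (S : Finset Γ) : Finset ((Γ ⧸ N) × Gen S) :=
  Finset.univ.filter fun e => e.1 = 1 ∨ e.1 * QuotientGroup.mk (e.2 : Γ) = 1

/-- The marginal `μ|_Λ` on `Z_Λ = {0,1}^A` of a measure on `Z_m` (identified with its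
`Γ_m`-periodic extension). -/
noncomputable def marg (A : Finset Γ) (μ : Conf N → ℝ) (ζ : {a // a ∈ A} → Bool) : ℝ :=
  ∑ η : Conf N, if (∀ a : {a // a ∈ A}, liftZ N η (a : Γ) = ζ a) then μ η else 0

/-- The density `φ_Λ = d(μ|_Λ)/dν_Λ`. -/
noncomputable def margDens (A : Finset Γ) (μ : Conf N → ℝ) (ζ : {a // a ∈ A} → Bool) : ℝ :=
  (Fintype.card ({a // a ∈ A} → Bool) : ℝ) * marg N A μ ζ

/-- The restricted Dirichlet form
`I°_Λ(μ) = (1/2) Σ_{e ∈ E_Λ} ∫_{Z_Λ} (π_e √φ_Λ)² dν_Λ` for the subgraph `Λ = (A, Eset)`. -/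
noncomputable def IrestV {S : Finset Γ} (A : Finset Γ) (Eset : Finset (Γ × Gen S))
    (μ : Conf N → ℝ) : ℝ :=
  (1 / 2) * ∑ e ∈ Eset, ∑ ζ : ({a // a ∈ A} → Bool),
    (Fintype.card ({a // a ∈ A} → Bool) : ℝ)⁻¹ *
      (Real.sqrt (margDens N A μ (exchOn A e.1 (e.1 * (e.2 : Γ)) ζ)) -
        Real.sqrt (margDens N A μ ζ)) ^ 2

/-- The marginal on `Z_Λ × Z_Λ` of the pushforward `σ̂μ` of `μ` under `η ↦ (η, σ⁻¹η)`. -/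
noncomputable def margTwo (σ : Γ) (A : Finset Γ) (μ : Conf N → ℝ)
    (ζ ζ' : {a // a ∈ A} → Bool) : ℝ :=
  ∑ η : Conf N,
    if ((∀ a : {a // a ∈ A}, liftZ N η (a : Γ) = ζ a) ∧
        (∀ a : {a // a ∈ A}, liftZ N η (σ * (a : Γ)) = ζ' a)) then μ η else 0

/-- The density of `(σ̂μ)|_{Λ×Λ}` with respect to `ν_Λ ⊗ ν_Λ`. -/
noncomputable def margTwoDens (σ : Γ) (A : Finset Γ) (μ : Conf N → ℝ)
    (ζ ζ' : {a // a ∈ A} → Bool) : ℝ :=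
  ((Fintype.card ({a // a ∈ A} → Bool) : ℝ)) ^ 2 * margTwo N σ A μ ζ ζ'

/-- `I^{(o,o)}_{Λ×Λ}(σ̂μ) = (1/2) ∫ (π̃_{o,o} √(d(σ̂μ)|_{Λ×Λ}/d(ν_Λ⊗ν_Λ)))² d(ν_Λ⊗ν_Λ)`. -/
noncomputable def Ioo (σ : Γ) (A : Finset Γ) (h1 : (1 : Γ) ∈ A) (μ : Conf N → ℝ) : ℝ :=
  (1 / 2) * ∑ ζ : ({a // a ∈ A} → Bool), ∑ ζ' : ({a // a ∈ A} → Bool),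
    (((Fintype.card ({a // a ∈ A} → Bool) : ℝ)) ^ 2)⁻¹ *
      (Real.sqrt (margTwoDens N σ A μ (Function.update ζ ⟨1, h1⟩ (ζ' ⟨1, h1⟩))
          (Function.update ζ' ⟨1, h1⟩ (ζ ⟨1, h1⟩))) -
        Real.sqrt (margTwoDens N σ A μ ζ ζ')) ^ 2

/-- The two-block restricted Dirichlet form `I°_{Λ×Λ}(σ̂μ)`, i.e. the Dirichlet form of
`L°_Λ ⊗ 1 + 1 ⊗ L°_Λ` of the square root of the density of `(σ̂μ)|_{Λ×Λ}`. -/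
noncomputable def ItwoRest {S : Finset Γ} (σ : Γ) (A : Finset Γ) (Eset : Finset (Γ × Gen S))
    (μ : Conf N → ℝ) : ℝ :=
  (1 / 2) * ∑ e ∈ Eset, ∑ ζ : ({a // a ∈ A} → Bool), ∑ ζ' : ({a // a ∈ A} → Bool),
    (((Fintype.card ({a // a ∈ A} → Bool) : ℝ)) ^ 2)⁻¹ *
      ((Real.sqrt (margTwoDens N σ A μ (exchOn A e.1 (e.1 * (e.2 : Γ)) ζ) ζ') -
          Real.sqrt (margTwoDens N σ A μ ζ ζ')) ^ 2 +
        (Real.sqrt (margTwoDens N σ A μ ζ (exchOn A e.1 (e.1 * (e.2 : Γ)) ζ')) -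
          Real.sqrt (margTwoDens N σ A μ ζ ζ')) ^ 2)

end Quot

/-- The edge set `E_Λ` of the subgraph `Λ` spanned by the ball of radius `K`. -/
def ELam (S : Finset Γ) (K : ℕ) : Finset (Γ × Gen S) :=
  (ballF S K ×ˢ (Finset.univ : Finset (Gen S))).filter fun e => e.1 * (e.2 : Γ) ∈ ballF S K

lemma exch_eq {α : Type} [DecidableEq α] (x y : α) (η : α → Bool) :
    exch x y η = fun z => η (Equiv.swap x y z) := by
  funext z
  simp only [exch, Equiv.swap_apply_def]
  split_ifs <;> rfl

lemma exch_exch {α : Type} [DecidableEq α] (x y : α) (η : α → Bool) :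
    exch x y (exch x y η) = η := by
  simp [exch_eq]

lemma dirichlet_abs {Z : Type} [Fintype Z] (T : Z → Z) (hT : ∀ η, T (T η) = η)
    (c ψ : Z → ℝ) (c0 : ℝ) (hc : ∀ η, c (T η) = c η) (h0 : ∀ η, c0 ≤ c η) :
    (c0 / 2) * ∑ η, (ψ (T η) - ψ η) ^ 2 ≤ - ∑ η, ψ η * (c η * (ψ (T η) - ψ η)) := by
  have h1 : ∑ η, ψ η * (c η * (ψ (T η) - ψ η))
      = ∑ η, ψ (T η) * (c η * (ψ η - ψ (T η))) := by
    have := Equiv.sum_comp (Function.Involutive.toPerm T hT)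
      (fun η => ψ η * (c η * (ψ (T η) - ψ η)))
    rw [← this]
    refine Finset.sum_congr rfl fun η _ => ?_
    change ψ (T η) * (c (T η) * (ψ (T (T η)) - ψ (T η))) = _
    rw [hT, hc]
  have h2 : - ∑ η, ψ η * (c η * (ψ (T η) - ψ η)) = ∑ η, (c η / 2) * (ψ (T η) - ψ η) ^ 2 := by
    have : - ∑ η, ψ η * (c η * (ψ (T η) - ψ η))
      = - ((1/2) * (∑ η, ψ η * (c η * (ψ (T η) - ψ η)) +
          ∑ η, ψ (T η) * (c η * (ψ η - ψ (T η))))) := by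
      rw [← h1]; ring
    rw [this, ← Finset.sum_add_distrib, Finset.mul_sum, ← Finset.sum_neg_distrib]
    refine Finset.sum_congr rfl fun η _ => ?_
    ring
  rw [h2, Finset.mul_sum]
  refine Finset.sum_le_sum fun η _ => ?_
  have := h0 η
  gcongr

lemma tv_abs {Z : Type} [Fintype Z] (T : Z → Z) (hT : ∀ η, T (T η) = η)
    (μ : Z → ℝ) (h0 : ∀ η, 0 ≤ μ η) (h1 : ∑ η, μ η = 1) :
    (∑ η, |μ (T η) - μ η|) ^ 2 ≤ 4 * ∑ η, (√(μ (T η)) - √(μ η)) ^ 2 := by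
  have e : ∀ η, |μ (T η) - μ η| = |√(μ (T η)) - √(μ η)| * (√(μ (T η)) + √(μ η)) := by
    intro η
    have a1 := Real.sq_sqrt (h0 η)
    have a2 := Real.sq_sqrt (h0 (T η))
    have : μ (T η) - μ η = (√(μ (T η)) - √(μ η)) * (√(μ (T η)) + √(μ η)) := by
      nlinarith
    rw [this, abs_mul, abs_of_nonneg (a := √(μ (T η)) + √(μ η)) (by positivity)]
  simp_rw [e]
  refine (Finset.sum_mul_sq_le_sq_mul_sq _ _ _).trans ?_
  simp_rw [sq_abs]
  rw [mul_comm]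
  refine mul_le_mul_of_nonneg_right ?_ (Finset.sum_nonneg fun _ _ => sq_nonneg _)
  have h2 : ∑ η, μ (T η) = 1 := by
    rw [← h1]; exact Equiv.sum_comp (Function.Involutive.toPerm T hT) μ
  calc ∑ η, (√(μ (T η)) + √(μ η)) ^ 2 ≤ ∑ η, (2 * μ (T η) + 2 * μ η) := by
        refine Finset.sum_le_sum fun η _ => ?_
        have a1 := Real.sq_sqrt (h0 η)
        have a2 := Real.sq_sqrt (h0 (T η))
        nlinarith [sq_nonneg (√(μ (T η)) - √(μ η))]
    _ = 4 := by
        rw [Finset.sum_add_distrib, ← Finset.mul_sum, ← Finset.mul_sum, h1, h2]; norm_num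

lemma cQ_symm {S : Finset Γ} (N : Subgroup Γ) [N.Normal] [DecidableEq (Γ ⧸ N)]
    (c : JumpRate S) (v : Γ ⧸ N) (s : Gen S) (η : Conf N)
    (hN : ∀ z ∈ (ballF S c.r ∪ (ballF S c.r).image ((s : Γ) * ·)) ∪
        ((ballF S c.r).image ((s : Γ)⁻¹ * ·) ∪ ballF S c.r), z ∈ N → z = 1) :
    cQ N c v s (exchQ N v (s : Γ) η) = cQ N c v s η := by
  unfold cQ
  rw [← c.symm_exch (Quotient.out v) s (liftZ N η)]
  apply c.localized
  intro z hz
  set x := Quotient.out v with hx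
  have hv : v = QuotientGroup.mk x := (QuotientGroup.out_eq' v).symm
  have key : ∀ w ∈ (ballF S c.r ∪ (ballF S c.r).image ((s : Γ) * ·)), z = x * w →
      ((QuotientGroup.mk z : Γ ⧸ N) = QuotientGroup.mk x → z = x) := by
    intro w hw hzw h
    have : w ∈ N := by
      have := QuotientGroup.eq.1 h.symm
      rw [hzw] at this; simpa using this
    rw [hzw, hN w (Finset.mem_union_left _ hw) this, mul_one]
  have key2 : ∀ w ∈ ((ballF S c.r).image ((s : Γ)⁻¹ * ·) ∪ ballF S c.r), z = x * s * w →
      ((QuotientGroup.mk z : Γ ⧸ N) = QuotientGroup.mk (x * s) → z = x * s) := by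
    intro w hw hzw h
    have : w ∈ N := by
      have := QuotientGroup.eq.1 h.symm
      rw [hzw] at this; simpa [mul_assoc] using this
    rw [hzw, hN w (Finset.mem_union_right _ hw) this, mul_one]
  have h1 : (QuotientGroup.mk z : Γ ⧸ N) = QuotientGroup.mk x → z = x := by
    rcases Finset.mem_union.1 hz with h | h <;> obtain ⟨w, hw, rfl⟩ := Finset.mem_image.1 h
    · exact key w (Finset.mem_union_left _ hw) rfl
    · exact key (s * w) (Finset.mem_union_right _ (Finset.mem_image_of_mem _ hw))
        (by simp [mul_assoc])
  have h2 : (QuotientGroup.mk z : Γ ⧸ N) = QuotientGroup.mk (x * s) → z = x * s := by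
    rcases Finset.mem_union.1 hz with h | h <;> obtain ⟨w, hw, rfl⟩ := Finset.mem_image.1 h
    · exact key2 ((s : Γ)⁻¹ * w) (Finset.mem_union_left _ (Finset.mem_image_of_mem _ hw))
        (by simp [mul_assoc])
    · exact key2 w (Finset.mem_union_right _ hw) rfl
  have h1' : (QuotientGroup.mk z : Γ ⧸ N) = v ↔ z = x := by
    rw [hv]; exact ⟨h1, fun h => by rw [h]⟩
  have h2' : (QuotientGroup.mk z : Γ ⧸ N) = v * QuotientGroup.mk (s : Γ) ↔ z = x * s := by
    rw [hv]; exact ⟨h2, fun h => by rw [h]; rfl⟩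
  simp only [liftZ, exchQ, exch, h1', h2']
  rw [hv]
  rfl

lemma exchQ_actQ (N : Subgroup Γ) [N.Normal] [DecidableEq (Γ ⧸ N)] (v σ : Γ ⧸ N) (s : Γ)
    (η : Conf N) : exchQ N (σ * v) s (actQ N σ η) = actQ N σ (exchQ N v s η) := by
  funext z
  simp only [exchQ, exch, actQ, mul_assoc, inv_mul_cancel_left, inv_mul_eq_iff_eq_mul]

lemma im_lower {S : Finset Γ} (N : Subgroup Γ) [N.Normal] [Fintype (Γ ⧸ N)]
    [DecidableEq (Γ ⧸ N)] (c : JumpRate S)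
    (hsym : ∀ (v : Γ ⧸ N) (s : Gen S) (η : Conf N),
      cQ N c v s (exchQ N v (s : Γ) η) = cQ N c v s η)
    (μ : Conf N → ℝ) (hμ : IsProb N μ) (hinv : IsInvariant N μ) (v : Γ ⧸ N) (s : Gen S) :
    (c.c₀ / 2) * (N.index * ∑ η, (√(μ (exchQ N v (s : Γ) η)) - √(μ η)) ^ 2) ≤ ImGen N c μ := by
  have hcard : (0 : ℝ) < Fintype.card (Conf N) := by exact_mod_cast Fintype.card_pos
  have hsq : ∀ η, sqrtDens N μ η = √(Fintype.card (Conf N) : ℝ) * √(μ η) := by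
    intro η
    simp only [sqrtDens, dens]
    rw [Real.sqrt_mul hcard.le]
  set D : (Γ ⧸ N) → Gen S → ℝ := fun v s =>
    ∑ η, (√(μ (exchQ N v (s : Γ) η)) - √(μ η)) ^ 2 with hD
  have hDinv : ∀ w s, D w s = D v s := by
    intro w s
    have e : Function.Bijective (actQ N (w * v⁻¹)) := by
      rw [Function.bijective_iff_has_inverse]
      refine ⟨actQ N (w * v⁻¹)⁻¹, fun η => ?_, fun η => ?_⟩ <;>
      · funext z; simp only [actQ]; group
    simp only [hD]
    rw [← e.sum_comp]
    refine Finset.sum_congr rfl fun η _ => ?_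
    have := exchQ_actQ N v (w * v⁻¹) (s : Γ) η
    rw [inv_mul_cancel_right] at this
    rw [this, hinv, hinv]
  have hDnn : ∀ w s, 0 ≤ D w s := fun w s => Finset.sum_nonneg fun _ _ => sq_nonneg _
  have h1 : ImGen N c μ = ∑ e : (Γ ⧸ N) × Gen S,
      - ∑ η, √(μ η) * (cQ N c e.1 e.2 η * (√(μ (exchQ N e.1 (e.2 : Γ) η)) - √(μ η))) := by
    simp only [ImGen, Lgen, nuU, hsq]
    rw [Finset.sum_neg_distrib, Finset.sum_comm]
    congr 1
    refine Finset.sum_congr rfl fun η _ => ?_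
    rw [Finset.mul_sum, Finset.mul_sum]
    refine Finset.sum_congr rfl fun e _ => ?_
    have := Real.mul_self_sqrt hcard.le
    generalize √(Fintype.card (Conf N) : ℝ) = q at *
    rw [← this]
    have hq : q ≠ 0 := by rintro rfl; rw [mul_zero] at this; linarith
    field_simp
  rw [h1]
  calc (c.c₀ / 2) * (N.index * D v s) ≤ ∑ e : (Γ ⧸ N) × Gen S, (c.c₀ / 2) * D e.1 e.2 := by
        rw [← Finset.mul_sum]
        refine mul_le_mul_of_nonneg_left ?_ (by have := c.c₀_pos; positivity)
        rw [Fintype.sum_prod_type, Subgroup.index_eq_card, Nat.card_eq_fintype_card]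
        rw [← nsmul_eq_mul, ← Finset.card_univ, ← Finset.sum_const]
        refine Finset.sum_le_sum fun w _ => ?_
        rw [← hDinv w s]
        exact Finset.single_le_sum (f := fun s => D w s) (fun s _ => hDnn w s) (Finset.mem_univ s)
    _ ≤ _ := by
        refine Finset.sum_le_sum fun e _ => ?_
        exact dirichlet_abs (exchQ N e.1 (e.2 : Γ)) (fun η => exch_exch _ _ η)
          (cQ N c e.1 e.2) (fun η => √(μ η)) c.c₀ (hsym e.1 e.2) (fun η => c.nondeg _ _ _)

/-- The product indicator that a configuration has pattern `ζ` at the sites `p`. -/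
noncomputable def Ind {J : Type} [Fintype J] (p : J → Γ) (ζ : J → Bool) (ξ : Γ → Bool) : ℝ :=
  ∏ j, if ξ (p j) = ζ j then (1 : ℝ) else 0

lemma Ind_nonneg {J : Type} [Fintype J] (p : J → Γ) (ζ : J → Bool) (ξ : Γ → Bool) :
    0 ≤ Ind p ζ ξ := Finset.prod_nonneg fun j _ => by split_ifs <;> norm_num

lemma Ind_le_one {J : Type} [Fintype J] (p : J → Γ) (ζ : J → Bool) (ξ : Γ → Bool) :
    Ind p ζ ξ ≤ 1 := Finset.prod_le_one (fun j _ => by split_ifs <;> norm_num)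
      (fun j _ => by split_ifs <;> norm_num)

lemma Ind_sum {J : Type} [Fintype J] (p q : J → Γ) (ζ : J → Bool) (ξ : Γ → Bool) :
    Ind (Sum.elim p q) (Sum.elim ζ ζ) ξ = Ind p ζ ξ * Ind q ζ ξ := by
  unfold Ind
  rw [Fintype.prod_sum_type]
  rfl

lemma evt_sep (Γs : ℕ → Subgroup Γ) (hdesc : ∀ m, Γs (m + 1) ≤ Γs m)
    (hsep : ∀ x : Γ, (∀ m, x ∈ Γs m) → x = 1) (T : Finset Γ) :
    ∀ᶠ m in atTop, ∀ z ∈ T, z ∈ Γs m → z = 1 := by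
  have hanti : Antitone Γs := antitone_nat_of_succ_le hdesc
  rw [Filter.eventually_all_finset]
  intro z _
  by_cases hz : z = 1
  · exact Eventually.of_forall fun _ _ => hz
  · have : ∃ m, z ∉ Γs m := by
      by_contra! h
      exact hz (hsep z h)
    obtain ⟨m0, h0⟩ := this
    filter_upwards [eventually_ge_atTop m0] with m hm h
    exact absurd (hanti hm h) h0

section Asym

variable (Γs : ℕ → Subgroup Γ) [∀ m, (Γs m).Normal]
    [∀ m, Fintype (Γ ⧸ Γs m)] [∀ m, DecidableEq (Γ ⧸ Γs m)]

/-- The admissible measures. -/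
def Adm {S : Finset Γ} (c : JumpRate S) (C : ℝ) (t : ℕ → ℝ) (m : ℕ)
    (μ : Conf (Γs m) → ℝ) : Prop :=
  IsProb (Γs m) μ ∧ IsInvariant (Γs m) μ ∧
    ImGen (Γs m) c μ ≤ C * ((Γs m).index : ℝ) / t m

/-- Asymptotic equality of pattern probabilities. -/
def RelP (adm : ∀ m, (Conf (Γs m) → ℝ) → Prop) {J : Type} [Fintype J] (ζ : J → Bool)
    (p q : J → Γ) : Prop :=
  ∀ ε : ℝ, 0 < ε → ∀ᶠ m in atTop, ∀ μ, adm m μ →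
    |Emeas (Γs m) μ (fun η => Ind p ζ (liftZ (Γs m) η)) -
      Emeas (Γs m) μ (fun η => Ind q ζ (liftZ (Γs m) η))| ≤ ε

variable {Γs}

lemma RelP.refl {adm : ∀ m, (Conf (Γs m) → ℝ) → Prop} {J : Type} [Fintype J] (ζ : J → Bool)
    (p : J → Γ) : RelP Γs adm ζ p p := by
  intro ε hε
  refine Eventually.of_forall fun m μ _ => ?_
  simpa using hε.le

lemma RelP.trans {adm : ∀ m, (Conf (Γs m) → ℝ) → Prop} {J : Type} [Fintype J] {ζ : J → Bool}
    {p q r : J → Γ} (h1 : RelP Γs adm ζ p q) (h2 : RelP Γs adm ζ q r) : RelP Γs adm ζ p r := by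
  intro ε hε
  filter_upwards [h1 (ε / 2) (by linarith), h2 (ε / 2) (by linarith)] with m a b μ hμ
  refine (abs_sub_le _ (Emeas (Γs m) μ (fun η => Ind q ζ (liftZ (Γs m) η))) _).trans ?_
  linarith [a μ hμ, b μ hμ]

lemma evt_tv {S : Finset Γ} (hdesc : ∀ m, Γs (m + 1) ≤ Γs m) [∀ m, (Γs m).FiniteIndex]
    (hsep : ∀ x : Γ, (∀ m, x ∈ Γs m) → x = 1)
    (t : ℕ → ℝ) (ht_pos : ∀ m, 0 < t m) (ht_top : Tendsto t atTop atTop)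
    (c : JumpRate S) (C : ℝ) (s : Gen S) (ε : ℝ) (hε : 0 < ε) :
    ∀ᶠ m in atTop, ∀ μ, Adm Γs c C t m μ → ∀ v : Γ ⧸ Γs m,
      ∑ η, |μ (exchQ (Γs m) v (s : Γ) η) - μ η| ≤ ε := by
  have hsymm : ∀ᶠ m in atTop, ∀ s' : Gen S, ∀ z ∈ (ballF S c.r ∪ (ballF S c.r).image ((s' : Γ) * ·)) ∪
        ((ballF S c.r).image ((s' : Γ)⁻¹ * ·) ∪ ballF S c.r), z ∈ Γs m → z = 1 := by
    rw [Filter.eventually_all]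
    intro s'
    exact evt_sep Γs hdesc hsep _
  have hc0 := c.c₀_pos
  have ht : ∀ᶠ m in atTop, 8 * C / (c.c₀ * ε ^ 2) ≤ t m := ht_top.eventually_ge_atTop _
  filter_upwards [hsymm, ht] with m hm htm μ ⟨hp, hi, hI⟩ v
  have h1 := im_lower (Γs m) c (fun v s η => cQ_symm (Γs m) c v s η (hm s)) μ hp hi v s
  have h2 := tv_abs (exchQ (Γs m) v (s : Γ)) (fun η => exch_exch _ _ η) μ hp.1 hp.2
  set D := ∑ η, (√(μ (exchQ (Γs m) v (s : Γ) η)) - √(μ η)) ^ 2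
  have hidx : (0 : ℝ) < (Γs m).index := by
    exact_mod_cast Nat.pos_of_ne_zero Subgroup.FiniteIndex.index_ne_zero
  have h3 : (c.c₀ / 2) * D ≤ C / t m := by
    have : (Γs m).index * ((c.c₀ / 2) * D) ≤ (Γs m).index * (C / t m) := by
      calc _ = (c.c₀ / 2) * ((Γs m).index * D) := by ring
        _ ≤ C * ((Γs m).index : ℝ) / t m := h1.trans hI
        _ = _ := by ring
    exact le_of_mul_le_mul_left this hidx
  have h4 : 4 * D ≤ ε ^ 2 := by
    rw [div_le_iff₀ (by positivity)] at htm
    rw [le_div_iff₀ (ht_pos m)] at h3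
    have hk : 0 < c.c₀ * t m := mul_pos hc0 (ht_pos m)
    by_contra! hcon
    have := mul_lt_mul_of_pos_left hcon hk
    nlinarith
  exact abs_le_of_sq_le_sq' (h2.trans h4) hε.le |>.2

lemma relP_edge {S : Finset Γ} (hdesc : ∀ m, Γs (m + 1) ≤ Γs m) [∀ m, (Γs m).FiniteIndex]
    (hsep : ∀ x : Γ, (∀ m, x ∈ Γs m) → x = 1)
    (t : ℕ → ℝ) (ht_pos : ∀ m, 0 < t m) (ht_top : Tendsto t atTop atTop)
    (c : JumpRate S) (C : ℝ) {J : Type} [Fintype J] (ζ : J → Bool) (p : J → Γ)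
    (a s : Γ) (hs : s ∈ S) :
    RelP Γs (Adm Γs c C t) ζ p (fun j => Equiv.swap a (a * s) (p j)) := by
  classical
  intro ε hε
  filter_upwards [evt_tv hdesc hsep t ht_pos ht_top c C ⟨s, hs⟩ ε hε,
    evt_sep Γs hdesc hsep (Finset.univ.image (fun j => a⁻¹ * p j) ∪
      Finset.univ.image (fun j => (a * s)⁻¹ * p j))] with m hm hsp μ hμ
  have key : ∀ η : Conf (Γs m), Ind (fun j => Equiv.swap a (a * s) (p j)) ζ (liftZ (Γs m) η)
      = Ind p ζ (liftZ (Γs m) (exchQ (Γs m) (QuotientGroup.mk a) s η)) := by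
    intro η
    unfold Ind
    refine Finset.prod_congr rfl fun j _ => ?_
    have h1 : (QuotientGroup.mk (p j) : Γ ⧸ Γs m) = QuotientGroup.mk a ↔ p j = a := by
      refine ⟨fun h => ?_, fun h => by rw [h]⟩
      have := hsp (a⁻¹ * p j) (Finset.mem_union_left _ (Finset.mem_image_of_mem _ (Finset.mem_univ j)))
        (QuotientGroup.eq.1 h.symm)
      exact (inv_mul_eq_one.1 this).symm
    have h2 : (QuotientGroup.mk (p j) : Γ ⧸ Γs m) = QuotientGroup.mk a * QuotientGroup.mk s
        ↔ p j = a * s := by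
      refine ⟨fun h => ?_, fun h => by rw [h]; rfl⟩
      have h' : (QuotientGroup.mk (p j) : Γ ⧸ Γs m) = QuotientGroup.mk (a * s) := h
      have := hsp ((a * s)⁻¹ * p j) (Finset.mem_union_right _ (Finset.mem_image_of_mem _ (Finset.mem_univ j)))
        (QuotientGroup.eq.1 h'.symm)
      exact (inv_mul_eq_one.1 this).symm
    have : liftZ (Γs m) η (Equiv.swap a (a * s) (p j))
        = liftZ (Γs m) (exchQ (Γs m) (QuotientGroup.mk a) s η) (p j) := by
      simp only [liftZ, exchQ, exch, h1, h2, Equiv.swap_apply_def]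
      split_ifs <;> rfl
    rw [this]
  simp_rw [key]
  unfold Emeas
  set T := exchQ (Γs m) (QuotientGroup.mk a) s with hT
  have hTT : Function.Involutive T := fun η => exch_exch _ _ η
  have e1 : ∑ η, μ η * Ind p ζ (liftZ (Γs m) (T η)) = ∑ η, μ (T η) * Ind p ζ (liftZ (Γs m) η) := by
    rw [← Equiv.sum_comp (hTT.toPerm T)]
    refine Finset.sum_congr rfl fun η _ => ?_
    change μ (T η) * Ind p ζ (liftZ (Γs m) (T (T η))) = _
    rw [hTT]
  rw [e1, abs_sub_comm, ← Finset.sum_sub_distrib]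
  refine (Finset.abs_sum_le_sum_abs _ _).trans (le_trans (Finset.sum_le_sum fun η _ => ?_)
    (hm μ hμ (QuotientGroup.mk a)))
  rw [← sub_mul, abs_mul, abs_of_nonneg (Ind_nonneg _ _ _)]
  exact mul_le_of_le_one_right (abs_nonneg _) (Ind_le_one _ _ _)

lemma relP_swap {S : Finset Γ} (hS_symm : ∀ s ∈ S, s⁻¹ ∈ S)
    (hS_gen : Subgroup.closure (S : Set Γ) = ⊤)
    (adm : ∀ m, (Conf (Γs m) → ℝ) → Prop) {J : Type} [Fintype J] (ζ : J → Bool)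
    (hB : ∀ (p : J → Γ) (a s : Γ), s ∈ S →
      RelP Γs adm ζ p (fun j => Equiv.swap a (a * s) (p j))) (p : J → Γ) (a b : Γ) :
    RelP Γs adm ζ p (fun j => Equiv.swap a b (p j)) := by
  have step : ∀ x s : Γ, s ∈ S →
      (∀ (a : Γ) (p : J → Γ), RelP Γs adm ζ p (fun j => Equiv.swap a (a * x) (p j))) →
      (∀ (a : Γ) (p : J → Γ), RelP Γs adm ζ p (fun j => Equiv.swap a (a * (x * s)) (p j))) := by
    intro x s hs ih a p
    by_cases h1 : a = a * (x * s)
    · rw [← h1]; simpa using RelP.refl ζ p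
    by_cases h2 : a = a * x
    · rw [← mul_assoc, ← h2]; exact hB p a s hs
    have e := Equiv.swap_mul_swap_mul_swap (x := a) (y := a * x) (z := a * (x * s)) h2 h1
    rw [Equiv.swap_comm, ← e]
    have r1 := hB p (a * x) s hs
    have r2 := r1.trans (ih a _)
    have r3 := r2.trans (hB _ (a * x) s hs)
    simpa only [Equiv.Perm.mul_apply, mul_assoc] using r3
  have main : ∀ g : Γ, ∀ (a : Γ) (p : J → Γ),
      RelP Γs adm ζ p (fun j => Equiv.swap a (a * g) (p j)) := by
    intro g
    have hg : g ∈ Subgroup.closure (S : Set Γ) := by rw [hS_gen]; trivial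
    induction hg using Subgroup.closure_induction_right with
    | one => intro a p; simpa using RelP.refl ζ p
    | mul_right x _ y hy ih => exact step x y hy ih
    | mul_inv_cancel x _ y hy ih => exact step x y⁻¹ (hS_symm y hy) ih
  have := main (a⁻¹ * b) a p
  simpa using this

lemma relP_inj (adm : ∀ m, (Conf (Γs m) → ℝ) → Prop) {J : Type} [Fintype J] (ζ : J → Bool)
    (hC : ∀ (p : J → Γ) (a b : Γ), RelP Γs adm ζ p (fun j => Equiv.swap a b (p j)))
    (p q : J → Γ) (hp : Function.Injective p) (hq : Function.Injective q) :
    RelP Γs adm ζ p q := by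
  classical
  have main : ∀ T : Finset J, ∃ p' : J → Γ, Function.Injective p' ∧ RelP Γs adm ζ p p' ∧
      ∀ j ∈ T, p' j = q j := by
    intro T
    induction T using Finset.induction_on with
    | empty => exact ⟨p, hp, RelP.refl ζ p, by simp⟩
    | insert j T hj ih =>
      obtain ⟨p', h1, h2, h3⟩ := ih
      refine ⟨fun k => Equiv.swap (p' j) (q j) (p' k), (Equiv.injective _).comp h1,
        h2.trans (hC _ _ _), ?_⟩
      intro k hk
      rcases Finset.mem_insert.1 hk with rfl | hk'
      · simp
      · have hne : k ≠ j := by rintro rfl; exact hj hk'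
        change Equiv.swap (p' j) (q j) (p' k) = q k
        rw [Equiv.swap_apply_of_ne_of_ne, h3 k hk']
        · exact fun h => hne (h1 h)
        · rw [h3 k hk']; exact fun h => hne (hq h)
  obtain ⟨p', _, h2, h3⟩ := main Finset.univ
  have : p' = q := funext fun j => h3 j (Finset.mem_univ j)
  rwa [← this]

end Asym

lemma sum_opt {K : Type} [Fintype K] [DecidableEq K] (F : Finset Γ) (g : Γ → ℝ)
    (h : K → Γ → ℝ) :
    ∑ ω ∈ Fintype.piFinset (fun _ : Option K => F), g (ω none) * ∏ a, h a (ω (some a))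
      = (∑ x ∈ F, g x) * ∏ a, ∑ x ∈ F, h a x := by
  have := Finset.prod_univ_sum (fun _ : Option K => F)
    (fun (o : Option K) (x : Γ) => Option.elim o (g x) (fun a => h a x))
  rw [Fintype.prod_option] at this
  simp only [Fintype.prod_option, Option.elim] at this
  exact this.symm

/-- Sites of the translate. -/
def sX {B : Finset Γ} (ω : Option {a // a ∈ B} → Γ) (a : {a // a ∈ B}) : Γ := ω none * a

/-- Independent sites. -/
def sY {B : Finset Γ} (ω : Option {a // a ∈ B} → Γ) (a : {a // a ∈ B}) : Γ := ω (some a)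

/-- The index set of tuples. -/
def Om (B F : Finset Γ) : Finset (Option {a // a ∈ B} → Γ) :=
  Fintype.piFinset (fun _ : Option {a // a ∈ B} => F)

/-- Difference of the two indicators. -/
noncomputable def Dif {B : Finset Γ} (ζ : {a // a ∈ B} → Bool) (ω : Option {a // a ∈ B} → Γ)
    (ξ : Γ → Bool) : ℝ := Ind (sX ω) ζ ξ - Ind (sY ω) ζ ξ

/-- The averaged difference. -/
noncomputable def Wz {B : Finset Γ} (F : Finset Γ) (ζ : {a // a ∈ B} → Bool)
    (ξ : Γ → Bool) : ℝ := ((Om B F).card : ℝ)⁻¹ * ∑ ω ∈ Om B F, Dif ζ ω ξ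

lemma card_Om (B F : Finset Γ) : ((Om B F).card : ℝ) = (F.card : ℝ) * (F.card : ℝ) ^ Fintype.card {a // a ∈ B} := by
  simp only [Om, Fintype.card_piFinset]
  rw [Fintype.prod_option]
  simp

lemma Wz_eq {B : Finset Γ} (F : Finset Γ) (hF : F.Nonempty) (ζ : {a // a ∈ B} → Bool)
    (ξ : Γ → Bool) :
    Wz F ζ ξ = (F.card : ℝ)⁻¹ * ∑ σ ∈ F, Ind (fun a : {a // a ∈ B} => σ * a) ζ ξ
      - ∏ a, bw ((F.card : ℝ)⁻¹ * ∑ σ ∈ F, (if ξ σ then (1 : ℝ) else 0)) (ζ a) := by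
  have hc : (0 : ℝ) < F.card := by exact_mod_cast hF.card_pos
  have h1 : ∑ ω ∈ Om B F, Ind (sX ω) ζ ξ
      = (∑ σ ∈ F, Ind (fun a : {a // a ∈ B} => σ * a) ζ ξ)
        * (F.card : ℝ) ^ Fintype.card {a // a ∈ B} := by
    have := sum_opt (K := {a // a ∈ B}) F
      (fun σ => Ind (fun a : {a // a ∈ B} => σ * a) ζ ξ) (fun _ _ => 1)
    simp only [Finset.prod_const_one, mul_one, Finset.sum_const, nsmul_eq_mul,
      Finset.prod_const, Finset.card_univ] at this
    exact this
  have h2 : ∑ ω ∈ Om B F, Ind (sY ω) ζ ξ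
      = F.card * ((F.card : ℝ) ^ Fintype.card {a // a ∈ B} *
        ∏ a, bw ((F.card : ℝ)⁻¹ * ∑ σ ∈ F, (if ξ σ then (1 : ℝ) else 0)) (ζ a)) := by
    have := sum_opt (K := {a // a ∈ B}) F (fun _ => 1)
      (fun a x => if ξ x = ζ a then (1 : ℝ) else 0)
    simp only [one_mul, Finset.sum_const, nsmul_eq_mul, mul_one] at this
    refine Eq.trans this ?_
    congr 1
    rw [← Finset.card_univ, ← Finset.prod_const, ← Finset.prod_mul_distrib]
    refine Finset.prod_congr rfl fun a _ => ?_
    cases ζ a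
    · have : ∀ x, (if ξ x = false then (1 : ℝ) else 0) = 1 - (if ξ x then (1 : ℝ) else 0) := by
        intro x; cases ξ x <;> simp
      simp_rw [this]
      rw [Finset.sum_sub_distrib]
      simp only [bw, Finset.sum_const, nsmul_eq_mul, mul_one]
      change _ = (F.card : ℝ) * (if false = true then _ else 1 - _)
      rw [if_neg (by decide), mul_sub, mul_one, mul_inv_cancel_left₀ hc.ne']
    · simp only [bw, if_true]
      field_simp
  unfold Wz Dif
  rw [Finset.sum_sub_distrib, h1, h2, card_Om]
  field_simp

lemma W_eq {S : Finset Γ} (N : Subgroup Γ) [N.Normal] (f : LocalBundleV S)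
    (F : Finset Γ) (hF : F.Nonempty) (η : Conf N) :
    fbarQ N f F 1 η - globalAvg f (etabarQ N F 1 η)
      = ∑ ζ : ({a // a ∈ ballF S f.r} → Bool),
        f.f 1 (fun z => if h : z ∈ ballF S f.r then ζ ⟨z, h⟩ else false)
          * Wz F ζ (liftZ N η) := by
  have h1 : ∀ σ : Γ, fQ N f (QuotientGroup.mk σ * 1) η
      = ∑ ζ : ({a // a ∈ ballF S f.r} → Bool),
        f.f 1 (fun z => if h : z ∈ ballF S f.r then ζ ⟨z, h⟩ else false)
          * Ind (fun a : {a // a ∈ ballF S f.r} => σ * a) ζ (liftZ N η) := by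
    intro σ
    rw [mul_one]
    unfold fQ
    set x := Quotient.out (QuotientGroup.mk σ : Γ ⧸ N)
    have hx : (QuotientGroup.mk x : Γ ⧸ N) = QuotientGroup.mk σ := QuotientGroup.out_eq' _
    have e1 : f.f x (liftZ N η) = f.f 1 (fun z => liftZ N η (σ * z)) := by
      have := f.invariant x⁻¹ x (liftZ N η)
      rw [← this, inv_mul_cancel]
      congr 1
      funext z
      simp only [liftZ, inv_inv]
      congr 1
      change (QuotientGroup.mk x : Γ ⧸ N) * QuotientGroup.mk z
        = QuotientGroup.mk σ * QuotientGroup.mk z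
      rw [hx]
    rw [e1]
    rw [Finset.sum_eq_single (fun a : {a // a ∈ ballF S f.r} => liftZ N η (σ * a))]
    · simp only [Ind, if_true, Finset.prod_const_one, mul_one]
      apply f.localized
      intro z hz
      simp only [one_mul, Finset.image_id'] at hz
      simp [hz]
    · intro ζ _ hne
      obtain ⟨a, ha⟩ := Function.ne_iff.1 hne
      have : Ind (fun a : {a // a ∈ ballF S f.r} => σ * a) ζ (liftZ N η) = 0 :=
        Finset.prod_eq_zero (Finset.mem_univ a) (if_neg fun h => ha h.symm)
      rw [this, mul_zero]
    · intro h; exact absurd (Finset.mem_univ _) h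
  unfold fbarQ globalAvg expCyl etabarQ
  simp_rw [h1, Wz_eq F hF]
  rw [Finset.sum_comm, Finset.mul_sum, ← Finset.sum_sub_distrib]
  refine Finset.sum_congr rfl fun ζ _ => ?_
  rw [← Finset.mul_sum]
  have e : (∑ σ ∈ F, if η (QuotientGroup.mk σ * 1) then (1 : ℝ) else 0)
      = ∑ σ ∈ F, if liftZ N η σ then (1 : ℝ) else 0 :=
    Finset.sum_congr rfl fun σ _ => by rw [mul_one]; rfl
  rw [e]
  ring

lemma count_le {Q : Type} [Fintype Q] [DecidableEq Q] (F : Finset Γ) (hF : F.Nonempty) (i : Q)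
    (φ : Γ → Γ) (hφ : Function.Injective φ) (ψ : (Q → Γ) → Γ)
    (hψ : ∀ ω x, ψ (Function.update ω i x) = ψ ω) :
    ∑ ω ∈ Fintype.piFinset (fun _ : Q => F), (if φ (ω i) = ψ ω then (1 : ℝ) else 0)
      ≤ ((Fintype.piFinset (fun _ : Q => F)).card : ℝ) / F.card := by
  have hc : (0 : ℝ) < F.card := by exact_mod_cast hF.card_pos
  rw [le_div_iff₀ hc, Finset.sum_boole]
  have : (((Fintype.piFinset (fun _ : Q => F)).filter (fun ω => φ (ω i) = ψ ω)) ×ˢ F).card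
      ≤ (Fintype.piFinset (fun _ : Q => F)).card := by
    refine Finset.card_le_card_of_injOn (fun y => Function.update y.1 i y.2) ?_ ?_
    · rintro ⟨ω, x⟩ h
      simp only [Finset.coe_product, Set.mem_prod, Finset.mem_coe, Finset.mem_filter,
        Fintype.mem_piFinset] at h ⊢
      intro q
      by_cases hq : q = i
      · subst hq; simpa using h.2
      · simpa [hq] using h.1.1 q
    · rintro ⟨ω, x⟩ h ⟨ω', x'⟩ h' he
      simp only [Finset.coe_product, Set.mem_prod, Finset.mem_coe, Finset.mem_filter,
        Fintype.mem_piFinset] at h h' he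
      have hx : x = x' := by simpa using congrFun he i
      have hi : ω i = ω' i := by
        apply hφ
        rw [h.1.2, h'.1.2, ← hψ ω x, he, hψ]
      have : ω = ω' := by
        funext q
        by_cases hq : q = i
        · rw [hq, hi]
        · simpa [hq] using congrFun he q
      rw [hx, this]
  rw [Finset.card_product] at this
  exact_mod_cast this

/-- Nondegenerate pairs of tuples. -/
def Good {B : Finset Γ} (ω ω' : Option {a // a ∈ B} → Γ) : Prop :=
  Function.Injective (sY ω) ∧ Function.Injective (sY ω') ∧
    ∀ u u', Sum.elim (sX ω) (sY ω) u ≠ Sum.elim (sX ω') (sY ω') u'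

open Classical in
lemma bad_inj {B F : Finset Γ} (hF : F.Nonempty) :
    ∑ ω ∈ Om B F, (if Function.Injective (sY (B := B) ω) then (0 : ℝ) else 1)
      ≤ (Fintype.card {a // a ∈ B} : ℝ) ^ 2 * (((Om B F).card : ℝ) / F.card) := by
  calc _ ≤ ∑ ω ∈ Om B F, ∑ a : {a // a ∈ B}, ∑ b : {a // a ∈ B},
          (if a ≠ b ∧ ω (some a) = ω (some b) then (1 : ℝ) else 0) := by
        refine Finset.sum_le_sum fun ω _ => ?_
        have hnn : ∀ a b : {a // a ∈ B},
          (0 : ℝ) ≤ (if a ≠ b ∧ ω (some a) = ω (some b) then (1 : ℝ) else 0) := by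
          intro a b; split_ifs <;> norm_num
        split_ifs with h
        · exact Finset.sum_nonneg fun a _ => Finset.sum_nonneg fun b _ => hnn a b
        · simp only [Function.Injective, not_forall] at h
          obtain ⟨a, b, hab, hne⟩ := h
          refine le_trans ?_ (Finset.single_le_sum (f := fun a => ∑ b : {a // a ∈ B},
            (if a ≠ b ∧ ω (some a) = ω (some b) then (1 : ℝ) else 0))
            (fun a _ => Finset.sum_nonneg fun b _ => hnn a b) (Finset.mem_univ a))
          refine le_trans ?_ (Finset.single_le_sum (f := fun b =>
            (if a ≠ b ∧ ω (some a) = ω (some b) then (1 : ℝ) else 0))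
            (fun b _ => hnn a b) (Finset.mem_univ b))
          have hab' : ω (some a) = ω (some b) := hab
          have hne' : a ≠ b := hne
          simp [hab', hne']
    _ = ∑ a : {a // a ∈ B}, ∑ b : {a // a ∈ B}, ∑ ω ∈ Om B F,
          (if a ≠ b ∧ ω (some a) = ω (some b) then (1 : ℝ) else 0) := by
        rw [Finset.sum_comm]
        refine Finset.sum_congr rfl fun a _ => ?_
        rw [Finset.sum_comm]
    _ ≤ ∑ a : {a // a ∈ B}, ∑ b : {a // a ∈ B}, (((Om B F).card : ℝ) / F.card) := by
        refine Finset.sum_le_sum fun a _ => Finset.sum_le_sum fun b _ => ?_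
        by_cases hab : a = b
        · simp only [hab, ne_eq, not_true_eq_false, false_and, if_false, Finset.sum_const_zero]
          positivity
        · simp only [ne_eq, hab, not_false_eq_true, true_and]
          exact count_le F hF (some a) id Function.injective_id (fun ω => ω (some b))
            (fun ω x => Function.update_of_ne (by simpa using fun h => hab h.symm) _ _)
    _ = _ := by
        simp only [Finset.sum_const, Finset.card_univ, nsmul_eq_mul]
        ring

open Classical in
lemma bad_cross {B F : Finset Γ} (hF : F.Nonempty) (ω' : Option {a // a ∈ B} → Γ) :
    ∑ ω ∈ Om B F, (if ∀ u u', Sum.elim (sX ω) (sY ω) u ≠ Sum.elim (sX ω') (sY ω') u'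
        then (0 : ℝ) else 1)
      ≤ 4 * (Fintype.card {a // a ∈ B} : ℝ) ^ 2 * (((Om B F).card : ℝ) / F.card) := by
  calc _ ≤ ∑ ω ∈ Om B F, ∑ u : {a // a ∈ B} ⊕ {a // a ∈ B}, ∑ u' : {a // a ∈ B} ⊕ {a // a ∈ B},
          (if Sum.elim (sX ω) (sY ω) u = Sum.elim (sX ω') (sY ω') u' then (1 : ℝ) else 0) := by
        refine Finset.sum_le_sum fun ω _ => ?_
        have hnn : ∀ u u', (0 : ℝ) ≤ (if Sum.elim (sX ω) (sY ω) u = Sum.elim (sX ω') (sY ω') u'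
            then (1 : ℝ) else 0) := by
          intro a b; split_ifs <;> norm_num
        split_ifs with h
        · exact Finset.sum_nonneg fun a _ => Finset.sum_nonneg fun b _ => hnn a b
        · push Not at h
          obtain ⟨a, b, hab⟩ := h
          refine le_trans ?_ (Finset.single_le_sum (f := fun u => ∑ u',
            (if Sum.elim (sX ω) (sY ω) u = Sum.elim (sX ω') (sY ω') u' then (1 : ℝ) else 0))
            (fun a _ => Finset.sum_nonneg fun b _ => hnn a b) (Finset.mem_univ a))
          refine le_trans ?_ (Finset.single_le_sum (f := fun u' =>
            (if Sum.elim (sX ω) (sY ω) a = Sum.elim (sX ω') (sY ω') u' then (1 : ℝ) else 0))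
            (fun b _ => hnn a b) (Finset.mem_univ b))
          rw [if_pos hab]
    _ = ∑ u : {a // a ∈ B} ⊕ {a // a ∈ B}, ∑ u' : {a // a ∈ B} ⊕ {a // a ∈ B}, ∑ ω ∈ Om B F,
          (if Sum.elim (sX ω) (sY ω) u = Sum.elim (sX ω') (sY ω') u' then (1 : ℝ) else 0) := by
        rw [Finset.sum_comm]
        refine Finset.sum_congr rfl fun a _ => ?_
        rw [Finset.sum_comm]
    _ ≤ ∑ u : {a // a ∈ B} ⊕ {a // a ∈ B}, ∑ u' : {a // a ∈ B} ⊕ {a // a ∈ B},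
          (((Om B F).card : ℝ) / F.card) := by
        refine Finset.sum_le_sum fun u _ => Finset.sum_le_sum fun u' _ => ?_
        rcases u with a | a
        · exact count_le F hF none (fun x => x * (a : Γ)) (mul_left_injective (a : Γ))
            (fun _ => Sum.elim (sX ω') (sY ω') u') (fun _ _ => rfl)
        · exact count_le F hF (some a) id Function.injective_id
            (fun _ => Sum.elim (sX ω') (sY ω') u') (fun _ _ => rfl)
    _ = _ := by
        simp only [Finset.sum_const, Finset.card_univ, nsmul_eq_mul, Fintype.card_sum, Nat.cast_add]
        ring

lemma ind_three {A : Prop} (P Q R : Prop) [Decidable A] [Decidable P] [Decidable Q] [Decidable R]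
    (h : A ↔ P ∧ Q ∧ R) : (if A then (0 : ℝ) else 1) ≤
      (if P then (0 : ℝ) else 1) + (if Q then (0 : ℝ) else 1) + (if R then (0 : ℝ) else 1) := by
  by_cases a1 : P <;> by_cases a2 : Q <;> by_cases a3 : R <;> simp [a1, a2, a3, h] <;> norm_num

open Classical in
lemma bad_total {B F : Finset Γ} (hF : F.Nonempty) :
    ∑ ω ∈ Om B F, ∑ ω' ∈ Om B F, (if Good ω ω' then (0 : ℝ) else 1)
      ≤ 6 * (Fintype.card {a // a ∈ B} : ℝ) ^ 2 * (((Om B F).card : ℝ) ^ 2 / F.card) := by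
  have h1 := bad_inj (B := B) hF
  calc _ ≤ ∑ ω ∈ Om B F, ∑ ω' ∈ Om B F,
        ((if Function.Injective (sY (B := B) ω) then (0 : ℝ) else 1)
        + (if Function.Injective (sY (B := B) ω') then (0 : ℝ) else 1)
        + (if ∀ u u', Sum.elim (sX ω) (sY ω) u ≠ Sum.elim (sX ω') (sY ω') u'
        then (0 : ℝ) else 1)) := by
        refine Finset.sum_le_sum fun ω _ => Finset.sum_le_sum fun ω' _ => ?_
        exact ind_three _ _ _ (Iff.rfl)
    _ = (Om B F).card * (∑ ω ∈ Om B F, (if Function.Injective (sY (B := B) ω) then (0 : ℝ) else 1))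
        + (Om B F).card * (∑ ω ∈ Om B F, (if Function.Injective (sY (B := B) ω) then (0 : ℝ) else 1))
        + ∑ ω' ∈ Om B F, ∑ ω ∈ Om B F,
          (if ∀ u u', Sum.elim (sX ω) (sY ω) u ≠ Sum.elim (sX ω') (sY ω') u'
        then (0 : ℝ) else 1) := by
        simp only [Finset.sum_add_distrib]
        congr 1
        · congr 1
          · simp only [Finset.sum_const, nsmul_eq_mul, Finset.mul_sum]
          · simp only [Finset.sum_const, nsmul_eq_mul]
        · rw [Finset.sum_comm]
    _ ≤ (Om B F).card * ((Fintype.card {a // a ∈ B} : ℝ) ^ 2 * (((Om B F).card : ℝ) / F.card))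
        + (Om B F).card * ((Fintype.card {a // a ∈ B} : ℝ) ^ 2 * (((Om B F).card : ℝ) / F.card))
        + ∑ ω' ∈ Om B F, 4 * (Fintype.card {a // a ∈ B} : ℝ) ^ 2 * (((Om B F).card : ℝ) / F.card) := by
        gcongr with ω' _
        exact bad_cross hF ω'
    _ = _ := by
        simp only [Finset.sum_const, nsmul_eq_mul]
        ring

lemma abs_Dif_le {B : Finset Γ} (ζ : {a // a ∈ B} → Bool) (ω : Option {a // a ∈ B} → Γ)
    (ξ : Γ → Bool) : |Dif ζ ω ξ| ≤ 1 := by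
  unfold Dif
  have h1 := Ind_nonneg (sX ω) ζ ξ
  have h2 := Ind_nonneg (sY ω) ζ ξ
  have h3 := Ind_le_one (sX ω) ζ ξ
  have h4 := Ind_le_one (sY ω) ζ ξ
  rw [abs_le]; constructor <;> linarith

lemma Emeas_abs_le (N : Subgroup Γ) [N.Normal] [Fintype (Γ ⧸ N)] [DecidableEq (Γ ⧸ N)]
    (μ : Conf N → ℝ) (hμ : IsProb N μ) (w : Conf N → ℝ) :
    Emeas N μ (fun η => |w η|) ≤ √(Emeas N μ (fun η => w η ^ 2)) := by
  apply Real.le_sqrt_of_sq_le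
  unfold Emeas
  set a := ∑ η, μ η * |w η| with ha
  have h0 : 0 ≤ ∑ η, μ η * (|w η| - a) ^ 2 :=
    Finset.sum_nonneg fun η _ => mul_nonneg (hμ.1 η) (sq_nonneg _)
  have h1 : ∀ b : ℝ, ∑ η, μ η * (|w η| - b) ^ 2
      = ∑ η, μ η * w η ^ 2 - 2 * b * ∑ η, μ η * |w η| + b ^ 2 * ∑ η, μ η := by
    intro b
    rw [Finset.mul_sum, Finset.mul_sum, ← Finset.sum_sub_distrib, ← Finset.sum_add_distrib]
    refine Finset.sum_congr rfl fun η _ => ?_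
    rw [← sq_abs (w η)]; ring
  rw [h1, hμ.2, ← ha] at h0
  nlinarith

open Classical in
lemma Emeas_Wz {B F : Finset Γ} (hF : F.Nonempty) (N : Subgroup Γ) [N.Normal] [Fintype (Γ ⧸ N)]
    [DecidableEq (Γ ⧸ N)] (μ : Conf N → ℝ) (hμ : IsProb N μ) (ζ : {a // a ∈ B} → Bool)
    (ε : ℝ) (hε : 0 < ε)
    (H : ∀ ω ∈ Om B F, ∀ ω' ∈ Om B F, Good ω ω' →
      Emeas N μ (fun η => Dif ζ ω (liftZ N η) * Dif ζ ω' (liftZ N η)) ≤ ε) :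
    Emeas N μ (fun η => Wz F ζ (liftZ N η) ^ 2)
      ≤ ε + 6 * (Fintype.card {a // a ∈ B} : ℝ) ^ 2 / F.card := by
  have hc : (0 : ℝ) < F.card := by exact_mod_cast hF.card_pos
  have hO : (0 : ℝ) < (Om B F).card := by rw [card_Om]; positivity
  have h1 : Emeas N μ (fun η => Wz F ζ (liftZ N η) ^ 2)
      = (((Om B F).card : ℝ) ^ 2)⁻¹ * ∑ ω ∈ Om B F, ∑ ω' ∈ Om B F,
        Emeas N μ (fun η => Dif ζ ω (liftZ N η) * Dif ζ ω' (liftZ N η)) := by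
    unfold Emeas Wz
    have : ∀ ω ∈ Om B F, ∑ ω' ∈ Om B F, ∑ η, μ η * (Dif ζ ω (liftZ N η) * Dif ζ ω' (liftZ N η))
        = ∑ η, ∑ ω' ∈ Om B F, μ η * (Dif ζ ω (liftZ N η) * Dif ζ ω' (liftZ N η)) :=
      fun ω _ => Finset.sum_comm
    rw [Finset.sum_congr rfl this, Finset.sum_comm, Finset.mul_sum]
    refine Finset.sum_congr rfl fun η _ => ?_
    simp_rw [← Finset.mul_sum]
    rw [← Finset.sum_mul, mul_pow, inv_pow, sq (∑ ω ∈ Om B F, Dif ζ ω (liftZ N η))]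
    ring
  have h2 : ∑ ω ∈ Om B F, ∑ ω' ∈ Om B F,
        Emeas N μ (fun η => Dif ζ ω (liftZ N η) * Dif ζ ω' (liftZ N η))
      ≤ ∑ ω ∈ Om B F, ∑ ω' ∈ Om B F, (ε + (if Good ω ω' then (0 : ℝ) else 1)) := by
    refine Finset.sum_le_sum fun ω hω => Finset.sum_le_sum fun ω' hω' => ?_
    split_ifs with hg
    · rw [add_zero]; exact H ω hω ω' hω' hg
    · have : Emeas N μ (fun η => Dif ζ ω (liftZ N η) * Dif ζ ω' (liftZ N η)) ≤ ∑ η, μ η := by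
        refine Finset.sum_le_sum fun η _ => ?_
        refine mul_le_of_le_one_right (hμ.1 η) ?_
        refine (le_abs_self _).trans ?_
        rw [abs_mul]
        exact mul_le_one₀ (abs_Dif_le _ _ _) (abs_nonneg _) (abs_Dif_le _ _ _)
      rw [hμ.2] at this
      linarith
  have h3 := bad_total (B := B) hF
  rw [h1, inv_mul_le_iff₀ (by positivity)]
  refine h2.trans ?_
  simp only [Finset.sum_add_distrib, Finset.sum_const, nsmul_eq_mul]
  refine (add_le_add_right h3 _).trans (le_of_eq ?_)
  field_simp

section Asym2

variable {Γs : ℕ → Subgroup Γ} [∀ m, (Γs m).Normal]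
    [∀ m, Fintype (Γ ⧸ Γs m)] [∀ m, DecidableEq (Γ ⧸ Γs m)]

lemma evt_pair (adm : ∀ m, (Conf (Γs m) → ℝ) → Prop)
    (hrel : ∀ {J : Type} [Fintype J] (ζ : J → Bool) (p q : J → Γ), Function.Injective p →
      Function.Injective q → RelP Γs adm ζ p q)
    {B : Finset Γ} (ζ : {a // a ∈ B} → Bool) (ω ω' : Option {a // a ∈ B} → Γ) (hg : Good ω ω')
    (ε : ℝ) (hε : 0 < ε) :
    ∀ᶠ m in atTop, ∀ μ, adm m μ →
      Emeas (Γs m) μ (fun η => Dif ζ ω (liftZ (Γs m) η) * Dif ζ ω' (liftZ (Γs m) η)) ≤ ε := by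
  obtain ⟨g1, g2, g3⟩ := hg
  have x1 : Function.Injective (sX ω) := fun a b h => Subtype.ext (mul_left_cancel h)
  have x2 : Function.Injective (sX ω') := fun a b h => Subtype.ext (mul_left_cancel h)
  have i1 : Function.Injective (Sum.elim (sX ω) (sX ω')) :=
    x1.sumElim x2 fun a b => g3 (Sum.inl a) (Sum.inl b)
  have i2 : Function.Injective (Sum.elim (sY ω) (sX ω')) :=
    g1.sumElim x2 fun a b => g3 (Sum.inr a) (Sum.inl b)
  have i3 : Function.Injective (Sum.elim (sX ω) (sY ω')) :=
    x1.sumElim g2 fun a b => g3 (Sum.inl a) (Sum.inr b)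
  have i4 : Function.Injective (Sum.elim (sY ω) (sY ω')) :=
    g1.sumElim g2 fun a b => g3 (Sum.inr a) (Sum.inr b)
  filter_upwards [hrel (Sum.elim ζ ζ) _ _ i1 i2 (ε / 2) (by linarith),
    hrel (Sum.elim ζ ζ) _ _ i4 i3 (ε / 2) (by linarith)] with m h1 h2 μ hμ
  have a1 := (abs_le.1 (h1 μ hμ)).2
  have a2 := (abs_le.1 (h2 μ hμ)).2
  simp only [Ind_sum] at a1 a2
  have : Emeas (Γs m) μ (fun η => Dif ζ ω (liftZ (Γs m) η) * Dif ζ ω' (liftZ (Γs m) η))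
      = (Emeas (Γs m) μ (fun η => Ind (sX ω) ζ (liftZ (Γs m) η) * Ind (sX ω') ζ (liftZ (Γs m) η))
        - Emeas (Γs m) μ (fun η => Ind (sY ω) ζ (liftZ (Γs m) η) * Ind (sX ω') ζ (liftZ (Γs m) η)))
      + (Emeas (Γs m) μ (fun η => Ind (sY ω) ζ (liftZ (Γs m) η) * Ind (sY ω') ζ (liftZ (Γs m) η))
        - Emeas (Γs m) μ (fun η => Ind (sX ω) ζ (liftZ (Γs m) η) * Ind (sY ω') ζ (liftZ (Γs m) η))) := by
    unfold Emeas Dif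
    rw [← Finset.sum_sub_distrib, ← Finset.sum_sub_distrib, ← Finset.sum_add_distrib]
    refine Finset.sum_congr rfl fun η _ => ?_
    ring
  rw [this]
  linarith

lemma evt_main {S : Finset Γ} (adm : ∀ m, (Conf (Γs m) → ℝ) → Prop)
    (hprob : ∀ m μ, adm m μ → IsProb (Γs m) μ)
    (hrel : ∀ {J : Type} [Fintype J] (ζ : J → Bool) (p q : J → Γ), Function.Injective p →
      Function.Injective q → RelP Γs adm ζ p q)
    (f : LocalBundleV S) (F : Finset Γ) (hF : F.Nonempty) (ε : ℝ) (hε : 0 < ε) :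
    ∀ᶠ m in atTop, ∀ μ, adm m μ →
      Emeas (Γs m) μ (fun η => |fbarQ (Γs m) f F 1 η - globalAvg f (etabarQ (Γs m) F 1 η)|)
      ≤ (∑ ζ : ({a // a ∈ ballF S f.r} → Bool),
          |f.f 1 (fun z => if h : z ∈ ballF S f.r then ζ ⟨z, h⟩ else false)|)
        * √(ε + 6 * (Fintype.card {a // a ∈ ballF S f.r} : ℝ) ^ 2 / F.card) := by
  have hev : ∀ᶠ m in atTop, ∀ ζ : ({a // a ∈ ballF S f.r} → Bool), ∀ ω ∈ Om (ballF S f.r) F,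
      ∀ ω' ∈ Om (ballF S f.r) F, Good ω ω' → ∀ μ, adm m μ →
      Emeas (Γs m) μ (fun η => Dif ζ ω (liftZ (Γs m) η) * Dif ζ ω' (liftZ (Γs m) η)) ≤ ε := by
    rw [Filter.eventually_all]
    intro ζ
    rw [Filter.eventually_all_finset]
    intro ω _
    rw [Filter.eventually_all_finset]
    intro ω' _
    by_cases hg : Good ω ω'
    · filter_upwards [evt_pair adm hrel ζ ω ω' hg ε hε] with m hm _
      exact hm
    · exact Eventually.of_forall fun m h => absurd h hg
  filter_upwards [hev] with m hm μ hμ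
  have hp := hprob m μ hμ
  set g : ({a // a ∈ ballF S f.r} → Bool) → ℝ := fun ζ =>
    f.f 1 (fun z => if h : z ∈ ballF S f.r then ζ ⟨z, h⟩ else false) with hgdef
  have h1 : ∀ ζ : ({a // a ∈ ballF S f.r} → Bool), Emeas (Γs m) μ (fun η => |Wz F ζ (liftZ (Γs m) η)|)
      ≤ √(ε + 6 * (Fintype.card {a // a ∈ ballF S f.r} : ℝ) ^ 2 / F.card) := by
    intro ζ
    refine (Emeas_abs_le (Γs m) μ hp _).trans (Real.sqrt_le_sqrt ?_)
    exact Emeas_Wz hF (Γs m) μ hp ζ ε hε fun ω hω ω' hω' hgd => hm ζ ω hω ω' hω' hgd μ hμ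
  calc _ ≤ ∑ ζ, |g ζ| * Emeas (Γs m) μ (fun η => |Wz F ζ (liftZ (Γs m) η)|) := by
        unfold Emeas
        simp_rw [Finset.mul_sum]
        rw [Finset.sum_comm]
        refine Finset.sum_le_sum fun η _ => ?_
        rw [W_eq (Γs m) f F hF η]
        refine (mul_le_mul_of_nonneg_left (Finset.abs_sum_le_sum_abs _ _) (hp.1 η)).trans ?_
        rw [Finset.mul_sum]
        refine Finset.sum_le_sum fun ζ _ => ?_
        rw [abs_mul]
        exact le_of_eq (by ring)
    _ ≤ ∑ ζ, |g ζ| * √(ε + 6 * (Fintype.card {a // a ∈ ballF S f.r} : ℝ) ^ 2 / F.card) :=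
        Finset.sum_le_sum fun ζ _ => mul_le_mul_of_nonneg_left (h1 ζ) (abs_nonneg _)
    _ = _ := by rw [Finset.sum_mul]

end Asym2

lemma folner_card [Infinite Γ] {S : Finset Γ} (hS_symm : ∀ s ∈ S, s⁻¹ ∈ S)
    (hS_gen : Subgroup.closure (S : Set Γ) = ⊤) {F : ℕ → Finset Γ} (hF : IsFolner S F) :
    Tendsto (fun i => ((F i).card : ℝ)⁻¹) atTop (nhds 0) := by
  have h1 : ∀ i, 1 ≤ ((F i * S) \ F i).card := by
    intro i
    rw [Nat.one_le_iff_ne_zero, Finset.card_ne_zero, Finset.sdiff_nonempty]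
    intro hsub
    obtain ⟨x, hx⟩ := hF.1 i
    have main : ∀ g : Γ, x * g ∈ F i := by
      intro g
      have hg : g ∈ Subgroup.closure (S : Set Γ) := by rw [hS_gen]; trivial
      induction hg using Subgroup.closure_induction_right with
      | one => simpa using hx
      | mul_right y _ s hs ih =>
        rw [← mul_assoc]; exact hsub (Finset.mul_mem_mul ih hs)
      | mul_inv_cancel y _ s hs ih =>
        rw [← mul_assoc]; exact hsub (Finset.mul_mem_mul ih (hS_symm s hs))
    have : (Set.univ : Set Γ) ⊆ (F i : Set Γ) := by
      intro g _
      have := main (x⁻¹ * g)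
      simpa using this
    exact Set.infinite_univ ((F i).finite_toSet.subset this)
  refine squeeze_zero (fun i => by positivity) (fun i => ?_) hF.2
  have : (1 : ℝ) ≤ ((F i * S) \ F i).card := by exact_mod_cast h1 i
  rw [inv_eq_one_div]
  gcongr

/-- **Theorem 3.2 (the one-block estimate).**
For every jump rate `c`, every `Γ`-invariant local function bundle `f` and every `C > 0`,
`lim_{i→∞} limsup_{m→∞} sup_{μ ∈ P_{m,C}} E_μ |f̄_{o,i} - ⟨f_o⟩(η̄_{o,i})| = 0`. -/
theorem one_block_estimate
    {Γ : Type} [Group Γ] [DecidableEq Γ] [Infinite Γ]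
    (S : Finset Γ) (hS_symm : ∀ s ∈ S, s⁻¹ ∈ S)
    (hS_gen : Subgroup.closure (S : Set Γ) = ⊤)
    (Γs : ℕ → Subgroup Γ) [∀ m, (Γs m).Normal] [∀ m, (Γs m).FiniteIndex]
    [∀ m, Fintype (Γ ⧸ Γs m)] [∀ m, DecidableEq (Γ ⧸ Γs m)]
    (hdesc : ∀ m, Γs (m + 1) ≤ Γs m)
    (hsep : ∀ x : Γ, (∀ m, x ∈ Γs m) → x = 1)
    (t : ℕ → ℝ) (ht_pos : ∀ m, 0 < t m) (ht_mono : StrictMono t)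
    (ht_top : Tendsto t atTop atTop)
    (ht_diam : ∀ m, Real.sqrt (t m) ≤ 2 * (diamQ (Γs m) S : ℝ))
    (F : ℕ → Finset Γ) (hF : IsFolner S F)
    (c : JumpRate S) (f : LocalBundleV S) (C : ℝ) (hC : 0 < C) :
    Tendsto (fun i : ℕ =>
        limsup (fun m : ℕ =>
            sSup {x : ℝ | ∃ μ : Conf (Γs m) → ℝ,
              IsProb (Γs m) μ ∧ IsInvariant (Γs m) μ ∧
                ImGen (Γs m) c μ ≤ C * ((Γs m).index : ℝ) / t m ∧
                x = Emeas (Γs m) μ (fun η =>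
                  |fbarQ (Γs m) f (F i) 1 η -
                    globalAvg f (etabarQ (Γs m) (F i) 1 η)|)})
          atTop)
      atTop (nhds 0) := by
  have hrel : ∀ {J : Type} [Fintype J] (ζ : J → Bool) (p q : J → Γ), Function.Injective p →
      Function.Injective q → RelP Γs (Adm Γs c C t) ζ p q := by
    intro J _ ζ p q hp hq
    refine relP_inj _ ζ (fun p a b => ?_) p q hp hq
    refine relP_swap hS_symm hS_gen _ ζ (fun p a s hs => ?_) p a b
    exact relP_edge hdesc hsep t ht_pos ht_top c C ζ p a s hs
  set G : ℝ := ∑ ζ : ({a // a ∈ ballF S f.r} → Bool),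
    |f.f 1 (fun z => if h : z ∈ ballF S f.r then ζ ⟨z, h⟩ else false)| with hG
  have hG0 : 0 ≤ G := Finset.sum_nonneg fun _ _ => abs_nonneg _
  set k : ℝ := (Fintype.card {a // a ∈ ballF S f.r} : ℝ) with hk
  have hlim : Tendsto (fun i => G * √(((F i).card : ℝ)⁻¹ + 6 * k ^ 2 / (F i).card)) atTop
      (nhds 0) := by
    have h := folner_card hS_symm hS_gen hF
    have h2 : Tendsto (fun i => G * √(((F i).card : ℝ)⁻¹ + 6 * k ^ 2 * ((F i).card : ℝ)⁻¹)) atTop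
        (nhds (G * √(0 + 6 * k ^ 2 * 0))) :=
      (Real.continuous_sqrt.tendsto _ |>.comp (h.add (h.const_mul _))).const_mul G
    simpa [div_eq_mul_inv] using h2
  have hup : ∀ i, ∀ᶠ m in atTop, sSup {x : ℝ | ∃ μ : Conf (Γs m) → ℝ,
              IsProb (Γs m) μ ∧ IsInvariant (Γs m) μ ∧
                ImGen (Γs m) c μ ≤ C * ((Γs m).index : ℝ) / t m ∧
                x = Emeas (Γs m) μ (fun η =>
                  |fbarQ (Γs m) f (F i) 1 η -
                    globalAvg f (etabarQ (Γs m) (F i) 1 η)|)}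
      ≤ G * √(((F i).card : ℝ)⁻¹ + 6 * k ^ 2 / (F i).card) := by
    intro i
    have hc : (0 : ℝ) < (F i).card := by exact_mod_cast (hF.1 i).card_pos
    filter_upwards [evt_main (Adm Γs c C t) (fun m μ h => h.1) hrel f (F i) (hF.1 i)
      (((F i).card : ℝ)⁻¹) (by positivity)] with m hm
    refine Real.sSup_le ?_ (by positivity)
    rintro x ⟨μ, h1, h2, h3, rfl⟩
    exact hm μ ⟨h1, h2, h3⟩
  have hlo : ∀ i m, 0 ≤ sSup {x : ℝ | ∃ μ : Conf (Γs m) → ℝ,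
              IsProb (Γs m) μ ∧ IsInvariant (Γs m) μ ∧
                ImGen (Γs m) c μ ≤ C * ((Γs m).index : ℝ) / t m ∧
                x = Emeas (Γs m) μ (fun η =>
                  |fbarQ (Γs m) f (F i) 1 η -
                    globalAvg f (etabarQ (Γs m) (F i) 1 η)|)} := by
    intro i m
    refine Real.sSup_nonneg ?_
    rintro x ⟨μ, h1, h2, h3, rfl⟩
    exact Finset.sum_nonneg fun η _ => mul_nonneg (h1.1 η) (abs_nonneg _)
  refine squeeze_zero (fun i => ?_) (fun i => ?_) hlim
  · exact le_limsup_of_frequently_le (Eventually.of_forall (hlo i)).frequently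
      ⟨_, Filter.eventually_map.2 (hup i)⟩
  · exact limsup_le_of_le (isCoboundedUnder_le_of_le atTop (hlo i)) (hup i)

end Tower
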